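/- Let d ≥ 1 and ε > 0. There exists a constant C = C(d,ε) with the following property. Let F ∈ ℤ[x_0,x_1,x_2,x_3] be a primitive homogeneous polynomial of degree d which is irreducible over ℚ and not divisible by x_0, defining the integral surface X = {F = 0} ⊂ P^3. Let B ≥ 1 be real, let p be a prime with p ≥ B^{1/√d + ε}, and let P ∈ P^3(𝔽_p) be a point with F(P) ≡ 0 (mod p) at which some partial derivative of F is nonzero mod p (a non-singular 𝔽_p-point of the reduction X_p). Then there exists a homogeneous polynomial G ∈ ℚ[x_0,x_1,x_2,x_3] of degree at most C which is not divisible by F and which vanishes at every rational point of X representable by an integer tuple (1,x_1,x_2,x_3) with |x_m| ≤ B for 1 ≤ m ≤ 3 whose reduction mod p equals P. -/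

import Mathlib

open MvPolynomial

/-- `v` reduces mod `p` to the same point of `P^3(𝔽_p)` as the integer tuple `ξ`. -/
def ReducesTo {n : ℕ} (p : ℕ) (ξ : Fin n → ℤ) (v : Fin n → ZMod p) : Prop :=
  ∃ c : ZMod p, c ≠ 0 ∧ (fun i => ((ξ i : ZMod p))) = c • v

/-!
Over the points reducing to `P`, Hensel's lemma expresses one affine coordinate modulo `p ^ n` as
a polynomial in the others. All monomials evaluated at these points are then polynomials in
`r` parameters divisible by `p`, so a matrix of such values is, modulo `p ^ n`, a product whose
inner index runs over the few monomials of degree at most `n` in `r` variables, the one of degree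
`k` carrying a factor `p ^ k`. This makes its determinant divisible by a large power of `p`,
larger than the bound on the determinant given by `B` once `p ≥ B ^ (d ^ (-1/r) + ε)` and the
degree of the monomials is large. The determinant is therefore zero, and there is a nontrivial
relation between the monomials. Only monomials not divisible by the leading monomial of the affine
equation are used, hence the relation is not a multiple of this equation.
-/

namespace DeterminantMethod

section Exponents

variable {σ : Type*} [Fintype σ]

/-- The exponents of the monomials of degree at most `D`. -/
noncomputable def exponentsLE (σ : Type*) [Fintype σ] (D : ℕ) : Finset (σ →₀ ℕ) :=
  (Finsupp.finite_of_degree_le D).toFinset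

@[simp]
theorem mem_exponentsLE {D : ℕ} {m : σ →₀ ℕ} : m ∈ exponentsLE σ D ↔ m.degree ≤ D := by
  simp [exponentsLE]

variable (σ) in
theorem card_exponentsLE (D : ℕ) :
    (exponentsLE σ D).card = (D + Fintype.card σ).choose (Fintype.card σ) := by
  classical
  rw [← Nat.choose_symm_add]
  induction D with
  | zero =>
    have hzero : exponentsLE σ 0 = {0} := by
      ext m
      simp only [mem_exponentsLE, nonpos_iff_eq_zero, Finsupp.degree_eq_zero_iff,
        Finset.mem_singleton]
    rw [hzero, Finset.card_singleton, Nat.choose_zero_right]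
  | succ D ih =>
    have hunion : exponentsLE σ (D + 1)
        = exponentsLE σ D ∪ Finset.univ.finsuppAntidiag (D + 1) := by
      ext m
      simp [Finset.mem_finsuppAntidiag, Finsupp.degree_eq_sum, Nat.le_succ_iff]
    have hdisj : Disjoint (exponentsLE σ D) (Finset.univ.finsuppAntidiag (D + 1)) := by
      refine Finset.disjoint_left.mpr fun m hm hm' => ?_
      rw [mem_exponentsLE, Finsupp.degree_eq_sum] at hm
      exact (Nat.lt_succ_of_le hm).ne (Finset.mem_finsuppAntidiag.mp hm').1
    have hcard : D + 1 + Fintype.card σ = D + Fintype.card σ + 1 := by ring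
    rw [hunion, Finset.card_union_of_disjoint hdisj, ih,
      Finset.card_finsuppAntidiag_nat_eq_choose, Finset.card_univ, hcard, Nat.choose_succ_succ,
      ← add_assoc, Nat.add_sub_cancel, add_comm D]

variable (σ) in
theorem sum_exponentsLE_tsub_degree (D : ℕ) : ∑ m ∈ exponentsLE σ D, (D - m.degree)
    = (D + Fintype.card σ).choose (Fintype.card σ + 1) := by
  induction D with
  | zero => simp
  | succ D ih =>
    have hsub : exponentsLE σ D ⊆ exponentsLE σ (D + 1) := fun m hm =>
      mem_exponentsLE.mpr ((mem_exponentsLE.mp hm).trans D.le_succ)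
    calc ∑ m ∈ exponentsLE σ (D + 1), (D + 1 - m.degree)
        = ∑ m ∈ exponentsLE σ D, (D + 1 - m.degree) := by
          refine (Finset.sum_subset hsub fun m _ hm => ?_).symm
          rw [mem_exponentsLE, not_le] at hm
          omega
      _ = ∑ m ∈ exponentsLE σ D, ((D - m.degree) + 1) :=
          Finset.sum_congr rfl fun m hm => Nat.sub_add_comm (mem_exponentsLE.mp hm)
      _ = (D + 1 + Fintype.card σ).choose (Fintype.card σ + 1) := by
          rw [Finset.sum_add_distrib, ih, Finset.sum_const, smul_eq_mul, mul_one,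
            card_exponentsLE, add_right_comm, Nat.choose_succ_succ, add_comm]

/-- The exponents of degree at most `D` that are not above `a`. If `a` is the leading exponent
of a polynomial `f` over a field, for a graded monomial order, the monomials with these exponents
are a basis of the polynomials of degree at most `D` modulo multiples of `f`. -/
noncomputable def standardExponents (a : σ →₀ ℕ) (D : ℕ) : Finset (σ →₀ ℕ) := by
  classical exact (exponentsLE σ D).filter fun m => ¬ a ≤ m

theorem mem_standardExponents {a m : σ →₀ ℕ} {D : ℕ} :
    m ∈ standardExponents a D ↔ m.degree ≤ D ∧ ¬ a ≤ m := by
  simp [standardExponents]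

theorem filter_le_exponentsLE (a : σ →₀ ℕ) (t : ℕ) [DecidablePred (a ≤ ·)] :
    (exponentsLE σ (t + a.degree)).filter (a ≤ ·)
      = (exponentsLE σ t).map (addRightEmbedding a) := by
  ext m
  simp only [Finset.mem_filter, Finset.mem_map, mem_exponentsLE, addRightEmbedding_apply]
  constructor
  · rintro ⟨hm, ham⟩
    refine ⟨m - a, ?_, tsub_add_cancel_of_le ham⟩
    rwa [← tsub_add_cancel_of_le ham, map_add, Nat.add_le_add_iff_right] at hm
  · rintro ⟨m, hm, rfl⟩
    exact ⟨by rw [map_add]; exact Nat.add_le_add_right hm _, le_add_self⟩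

theorem sum_standardExponents_add (a : σ →₀ ℕ) (t : ℕ) (φ : ℕ → ℕ) :
    ∑ m ∈ standardExponents a (t + a.degree), φ m.degree
        + ∑ m ∈ exponentsLE σ t, φ (m.degree + a.degree)
      = ∑ m ∈ exponentsLE σ (t + a.degree), φ m.degree := by
  classical
  rw [← Finset.sum_filter_not_add_sum_filter (exponentsLE σ (t + a.degree)) (a ≤ ·),
    filter_le_exponentsLE, Finset.sum_map]
  simp only [standardExponents, addRightEmbedding_apply, map_add]

theorem sum_standardExponents_congr {a b : σ →₀ ℕ} (h : a.degree = b.degree) (t : ℕ)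
    (φ : ℕ → ℕ) : ∑ m ∈ standardExponents a (t + a.degree), φ m.degree
      = ∑ m ∈ standardExponents b (t + a.degree), φ m.degree := by
  have ha := sum_standardExponents_add a t φ
  have hb := sum_standardExponents_add b t φ
  rw [← h] at hb
  exact Nat.add_right_cancel (ha.trans hb.symm)

theorem card_standardExponents_add (a : σ →₀ ℕ) (t : ℕ) :
    (standardExponents a (t + a.degree)).card + (t + Fintype.card σ).choose (Fintype.card σ)
      = (t + a.degree + Fintype.card σ).choose (Fintype.card σ) := by
  simpa only [Finset.sum_const, smul_eq_mul, mul_one, card_exponentsLE] using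
    sum_standardExponents_add a t fun _ => 1

theorem sum_standardExponents_tsub_degree_add (a : σ →₀ ℕ) (t : ℕ) :
    ∑ m ∈ standardExponents a (t + a.degree), (t + a.degree - m.degree)
        + (t + Fintype.card σ).choose (Fintype.card σ + 1)
      = (t + a.degree + Fintype.card σ).choose (Fintype.card σ + 1) := by
  simpa only [Nat.add_sub_add_right, sum_exponentsLE_tsub_degree] using
    sum_standardExponents_add a t (t + a.degree - ·)

end Exponents

theorem not_dvd_of_forall_not_le {R σ : Type*} [CommRing R] [NoZeroDivisors R]
    (m : MonomialOrder σ) {f g : MvPolynomial σ R} (hg : g ≠ 0)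
    (h : ∀ a ∈ g.support, ¬ m.degree f ≤ a) : ¬ f ∣ g := by
  rintro ⟨q, rfl⟩
  refine h _ (m.degree_mem_support hg) ?_
  rw [m.degree_mul (left_ne_zero_of_mul hg) (right_ne_zero_of_mul hg)]
  exact le_self_add

theorem eval_aeval {R σ τ : Type*} [CommSemiring R] (x : τ → R) (φ : σ → MvPolynomial τ R)
    (f : MvPolynomial σ R) : eval x (aeval φ f) = eval (fun i => eval x (φ i)) f := by
  simp only [← aeval_eq_eval, comp_aeval_apply]

section LocalExpansion

variable {R σ : Type*} [CommRing R]

theorem dvd_eval_sub_eval {p : R} {x y : σ → R} (h : ∀ i, p ∣ x i - y i) (f : MvPolynomial σ R) :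
    p ∣ eval x f - eval y f := by
  simp only [← Ideal.mem_span_singleton, ← Ideal.Quotient.eq] at h ⊢
  rw [map_eval, map_eval]
  exact congrArg (fun z => eval z _) (funext h)

theorem exists_eval_update_add_eq [DecidableEq σ] (i : σ) (x : σ → R) (h : R)
    (f : MvPolynomial σ R) : ∃ k, eval (Function.update x i (x i + h)) f
      = eval x f + h * eval x (pderiv i f) + k * h ^ 2 := by
  induction f using MvPolynomial.induction_on with
  | C a => exact ⟨0, by simp⟩
  | add f g hf hg =>
    obtain ⟨k, hk⟩ := hf
    obtain ⟨l, hl⟩ := hg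
    refine ⟨k + l, ?_⟩
    simp only [map_add]
    linear_combination hk + hl
  | mul_X f j hf =>
    obtain ⟨k, hk⟩ := hf
    obtain rfl | hj := eq_or_ne j i
    · refine ⟨eval x (pderiv j f) + k * x j + k * h, ?_⟩
      simp only [map_mul, eval_X, Derivation.leibniz, pderiv_X_self, Function.update_self,
        smul_eq_mul, map_add, map_one, hk]
      ring
    · refine ⟨k * x j, ?_⟩
      simp only [map_mul, eval_X, Derivation.leibniz, pderiv_X_of_ne hj,
        Function.update_of_ne hj, smul_eq_mul, mul_zero, zero_add, hk]
      ring

/-- Substitution of `ψ`, a polynomial in the variables other than `X i`, for the variable `X i`. -/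
noncomputable def substVar [DecidableEq σ] (i : σ) (ψ : MvPolynomial {j // j ≠ i} R) :
    MvPolynomial σ R →ₐ[R] MvPolynomial {j // j ≠ i} R :=
  aeval fun l => if h : l = i then ψ else X ⟨l, h⟩

variable {i : σ}

theorem eval_substVar [DecidableEq σ] (ψ : MvPolynomial {j // j ≠ i} R) (f : MvPolynomial σ R)
    (x : σ → R) : eval (fun j : {j // j ≠ i} => x j) (substVar i ψ f)
      = eval (Function.update x i (eval (fun j : {j // j ≠ i} => x j) ψ)) f := by
  rw [substVar, eval_aeval]
  refine congrArg (fun y => eval y f) (funext fun l => ?_)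
  obtain rfl | hl := eq_or_ne l i
  · simp only [dif_pos, Function.update_self]
  · simp only [dif_neg hl, eval_X, Function.update_of_ne hl]

theorem exists_pow_dvd_sub_eval {p : R} {f : MvPolynomial σ R} {x₀ : σ → R}
    (hf : IsCoprime (eval x₀ (pderiv i f)) p) (n : ℕ) :
    ∃ ψ : MvPolynomial {j // j ≠ i} R, ∀ x : σ → R, (∀ j, p ∣ x j - x₀ j) → eval x f = 0 →
      p ^ (n + 1) ∣ x i - eval (fun j : {j // j ≠ i} => x j) ψ := by
  classical
  obtain ⟨u, w, huw⟩ := hf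
  induction n with
  | zero => exact ⟨C (x₀ i), fun x hx _ => by simpa using hx i⟩
  | succ n ih =>
    obtain ⟨ψ, hψ⟩ := ih
    -- A Newton step: `u` inverts the derivative `∂f/∂x_i` modulo `p`.
    refine ⟨ψ - C u * substVar i ψ f, fun x hx hfx => ?_⟩
    obtain ⟨a, ha⟩ := hψ x hx hfx
    obtain ⟨b, hb⟩ := dvd_eval_sub_eval hx (pderiv i f)
    have hx_add : eval (fun j : {j // j ≠ i} => x j) ψ = x i + -(p ^ (n + 1) * a) := by
      linear_combination -ha
    obtain ⟨k, hk⟩ := exists_eval_update_add_eq i x (-(p ^ (n + 1) * a)) f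
    refine ⟨a * (w - u * b) + u * k * p ^ n * a ^ 2, ?_⟩
    rw [map_sub, map_mul, eval_C, eval_substVar, hx_add, hk, hfx]
    linear_combination (-(p ^ (n + 1) * a * u)) * hb - p ^ (n + 1) * a * huw

theorem exists_pow_dvd_eval_sub_eval {p : R} {f : MvPolynomial σ R} {x₀ : σ → R}
    (hf : IsCoprime (eval x₀ (pderiv i f)) p) (n : ℕ) (g : MvPolynomial σ R) :
    ∃ h : MvPolynomial {j // j ≠ i} R, ∀ x : σ → R, (∀ j, p ∣ x j - x₀ j) → eval x f = 0 →
      p ^ n ∣ eval x g - eval (fun j : {j // j ≠ i} => x j) h := by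
  classical
  obtain ⟨ψ, hψ⟩ := exists_pow_dvd_sub_eval hf n
  refine ⟨substVar i ψ g, fun x hx hfx => (pow_dvd_pow p n.le_succ).trans ?_⟩
  rw [eval_substVar]
  refine dvd_eval_sub_eval (fun j => ?_) g
  obtain rfl | hj := eq_or_ne j i
  · simpa only [Function.update_self] using hψ x hx hfx
  · simp only [Function.update_of_ne hj, sub_self, dvd_zero]

end LocalExpansion

theorem exists_pow_dvd_eval_add_mul_sub_sum {R τ : Type*} [CommRing R] [Fintype τ] (p : R) (n : ℕ)
    (f : MvPolynomial τ R) (y₀ : τ → R) :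
    ∃ c : (τ →₀ ℕ) → R, ∀ y : τ → R, p ^ n ∣ eval (fun i => y₀ i + p * y i) f
      - ∑ α ∈ exponentsLE τ n, p ^ α.degree * (∏ i, y i ^ α i) * c α := by
  let f' : MvPolynomial τ R := aeval (fun i => X i + C (y₀ i)) f
  refine ⟨f'.coeff, fun y => ?_⟩
  have hterm (m : τ →₀ ℕ) : f'.coeff m * ∏ i, (p * y i) ^ m i
      = p ^ m.degree * (∏ i, y i ^ m i) * f'.coeff m := by
    simp only [mul_pow, Finset.prod_mul_distrib, Finset.prod_pow_eq_pow_sum,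
      Finsupp.degree_eq_sum]
    ring
  have heval : eval (fun i => y₀ i + p * y i) f = eval (fun i => p * y i) f' := by
    simp only [f', eval_aeval, map_add, eval_X, eval_C, add_comm]
  have hsum : eval (fun i => p * y i) f' = ∑ m ∈ f'.support ∪ exponentsLE τ n,
      p ^ m.degree * (∏ i, y i ^ m i) * f'.coeff m := by
    simp only [eval_eq', hterm]
    refine Finset.sum_subset Finset.subset_union_left fun m _ hm => ?_
    rw [notMem_support_iff.mp hm, mul_zero]
  rw [heval, hsum, ← Finset.sum_sdiff Finset.subset_union_right, add_sub_cancel_right]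
  refine Finset.dvd_sum fun m hm => ?_
  have hdeg : n < m.degree := by
    simpa only [mem_exponentsLE, not_le] using (Finset.mem_sdiff.mp hm).2
  exact dvd_mul_of_dvd_left (dvd_mul_of_dvd_left (pow_dvd_pow p hdeg.le) _) _

theorem exists_pow_dvd_eval_sub_sum {R σ : Type*} [CommRing R] [Fintype σ] [DecidableEq σ]
    {p : R} {f : MvPolynomial σ R} {x₀ : σ → R} {i : σ}
    (hf : IsCoprime (eval x₀ (pderiv i f)) p) (n : ℕ) (g : MvPolynomial σ R) :
    ∃ c : ({j // j ≠ i} →₀ ℕ) → R, ∀ y : σ → R, eval (fun j => x₀ j + p * y j) f = 0 →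
      p ^ n ∣ eval (fun j => x₀ j + p * y j) g
        - ∑ α ∈ exponentsLE {j // j ≠ i} n,
            p ^ α.degree * (∏ j : {j // j ≠ i}, y j ^ α j) * c α := by
  obtain ⟨h, hh⟩ := exists_pow_dvd_eval_sub_eval hf n g
  obtain ⟨c, hc⟩ := exists_pow_dvd_eval_add_mul_sub_sum p n h fun j => x₀ j
  refine ⟨c, fun y hy => ?_⟩
  have hgh := hh _ (fun j => by simp only [add_sub_cancel_left, dvd_mul_right]) hy
  simpa only [sub_add_sub_cancel] using dvd_add hgh (hc fun j => y j)

section Determinant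

variable {R ι κ : Type*} [CommRing R] [Fintype ι] [DecidableEq ι]

theorem det_mul_eq_sum [Fintype κ] (A : Matrix ι κ R) (M : Matrix κ ι R) :
    (A * M).det = ∑ q : ι → κ, (∏ i, A i (q i)) * (M.submatrix q id).det := by
  classical
  have hrows : A * M = fun i => ∑ k, A i k • M k := by
    ext i j
    simp [Matrix.mul_apply]
  rw [hrows]
  refine (Matrix.detRowAlternating.toMultilinearMap.map_sum fun i k => A i k • M k).trans ?_
  exact Finset.sum_congr rfl fun q _ =>
    Matrix.detRowAlternating.toMultilinearMap.map_smul_univ _ _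

theorem det_submatrix_eq_zero_of_not_injective (M : Matrix κ ι R) {q : ι → κ}
    (hq : ¬ Function.Injective q) : (M.submatrix q id).det = 0 := by
  obtain ⟨i, j, hij, hne⟩ := Function.not_injective_iff.mp hq
  exact Matrix.det_zero_of_row_eq hne (by ext l; simp only [Matrix.submatrix_apply, hij])

theorem pow_dvd_pow_mul_det_mul [Fintype κ] {p : R} {w : κ → ℕ} {n : ℕ} (A : Matrix ι κ R)
    (M : Matrix κ ι R) (hA : ∀ i k, p ^ w k ∣ A i k) :
    p ^ (n * Fintype.card ι) ∣ p ^ (∑ k, (n - w k)) * (A * M).det := by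
  rw [det_mul_eq_sum, Finset.mul_sum]
  refine Finset.dvd_sum fun q _ => ?_
  by_cases hq : Function.Injective q
  · have hsum : ∑ i, (n - w (q i)) ≤ ∑ k, (n - w k) := by
      classical
      rw [← Finset.sum_image (f := fun k => n - w k) hq.injOn]
      exact Finset.sum_le_sum_of_subset (Finset.subset_univ _)
    have hle : n * Fintype.card ι ≤ ∑ k, (n - w k) + ∑ i, w (q i) := calc
      n * Fintype.card ι = ∑ _i : ι, n := by simp [mul_comm]
      _ ≤ ∑ i, ((n - w (q i)) + w (q i)) := Finset.sum_le_sum fun i _ => le_tsub_add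
      _ ≤ ∑ k, (n - w k) + ∑ i, w (q i) := by
        rw [Finset.sum_add_distrib]; exact Nat.add_le_add_right hsum _
    refine (pow_dvd_pow p hle).trans ?_
    rw [pow_add, ← mul_assoc, ← Finset.prod_pow_eq_pow_sum _ (fun i => w (q i))]
    exact dvd_mul_of_dvd_left
      (mul_dvd_mul_left _ (Finset.prod_dvd_prod_of_dvd _ _ fun i _ => hA i (q i))) _
  · rw [det_submatrix_eq_zero_of_not_injective M hq, mul_zero, mul_zero]
    exact dvd_zero _

theorem pow_dvd_pow_mul_det_of_dvd_sub_mul [Fintype κ] {p : R} {w : κ → ℕ} {n : ℕ}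
    {N : Matrix ι ι R} {A : Matrix ι κ R} {M : Matrix κ ι R} (hA : ∀ i k, p ^ w k ∣ A i k)
    (hN : ∀ i j, p ^ n ∣ N i j - (A * M) i j) :
    p ^ (n * Fintype.card ι) ∣ p ^ (∑ k, (n - w k)) * N.det := by
  choose E hE using hN
  have hfactor :
      N = Matrix.fromCols A (p ^ n • (1 : Matrix ι ι R)) * Matrix.fromRows M (Matrix.of E) := by
    ext i j
    rw [Matrix.fromCols_mul_fromRows, Matrix.smul_mul, Matrix.one_mul, Matrix.add_apply,
      Matrix.smul_apply, Matrix.of_apply, smul_eq_mul, ← hE, add_sub_cancel]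
  have hdvd (i : ι) (k : κ ⊕ ι) :
      p ^ Sum.elim w (fun _ => n) k ∣ Matrix.fromCols A (p ^ n • (1 : Matrix ι ι R)) i k := by
    obtain k | j := k
    · exact hA i k
    · exact dvd_mul_right _ _
  have hdet := pow_dvd_pow_mul_det_mul (n := n) _ (Matrix.fromRows M (Matrix.of E)) hdvd
  simpa only [← hfactor, Fintype.sum_sum_type, Sum.elim_inl, Sum.elim_inr, tsub_self,
    Finset.sum_const_zero, add_zero] using hdet

theorem map_det_le_prod {S : Type*} [CommRing S] [LinearOrder S] [IsStrictOrderedRing S]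
    [Nontrivial R] {A : Matrix ι ι R} {abv : AbsoluteValue R S} {b : ι → S}
    (hA : ∀ i j, abv (A i j) ≤ b j) : abv A.det ≤ (Fintype.card ι).factorial * ∏ j, b j := calc
  abv A.det ≤ ∑ σ : Equiv.Perm ι, abv (Equiv.Perm.sign σ • ∏ j, A (σ j) j) := by
    rw [Matrix.det_apply]; exact abv.sum_le _ _
  _ = ∑ σ : Equiv.Perm ι, ∏ j, abv (A (σ j) j) :=
    Finset.sum_congr rfl fun σ _ => by rw [abv.map_units_int_smul, abv.map_prod]
  _ ≤ ∑ _σ : Equiv.Perm ι, ∏ j, b j := by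
    gcongr with σ _ j _
    exact hA _ _
  _ = (Fintype.card ι).factorial * ∏ j, b j := by
    rw [Finset.sum_const, Finset.card_univ, Fintype.card_perm, nsmul_eq_mul]

end Determinant

section LinearAlgebra

variable {K ι α : Type*} [Field K] [Fintype ι] [DecidableEq ι]

theorem exists_det_ne_zero_of_span_eq_top {w : α → ι → K}
    (hw : Submodule.span K (Set.range w) = ⊤) :
    ∃ x : ι → α, (Matrix.of fun i => w (x i)).det ≠ 0 := by
  obtain ⟨κ, a, -, hspan, hli⟩ := exists_linearIndependent' K w
  let b : Module.Basis κ K (ι → K) := Module.Basis.mk hli (hspan.trans hw).ge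
  let e : ι ≃ κ := (Pi.basisFun K ι).indexEquiv b
  refine ⟨a ∘ e, IsUnit.ne_zero ?_⟩
  rw [← Matrix.isUnit_iff_isUnit_det, ← Matrix.linearIndependent_rows_iff_isUnit]
  exact hli.comp e e.injective

theorem exists_ne_zero_forall_dotProduct_eq_zero {w : α → ι → K}
    (h : ∀ x : ι → α, (Matrix.of fun i => w (x i)).det = 0) :
    ∃ c : ι → K, c ≠ 0 ∧ ∀ x, c ⬝ᵥ w x = 0 := by
  have hspan : Submodule.span K (Set.range w) < ⊤ := by
    refine lt_top_iff_ne_top.mpr fun htop => ?_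
    obtain ⟨x, hx⟩ := exists_det_ne_zero_of_span_eq_top htop
    exact hx (h x)
  obtain ⟨φ, hφ, hker⟩ := Submodule.exists_le_ker_of_lt_top _ hspan
  refine ⟨(dotProductEquiv K ι).symm φ, by simpa using hφ, fun x => ?_⟩
  have hx : φ (w x) = 0 := hker (Submodule.subset_span ⟨x, rfl⟩)
  rwa [← (dotProductEquiv K ι).apply_symm_apply φ] at hx

end LinearAlgebra

section Interpolation

variable {R σ : Type*}

/-- The generalized Vandermonde matrix whose rows are the values at the points `x a` of the
monomials with exponent in `s`; there are as many points as monomials. -/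
noncomputable def monomialMatrix [CommSemiring R] {s : Finset (σ →₀ ℕ)} (x : s → σ → R) :
    Matrix s s R :=
  Matrix.of fun a m => eval (x a) (monomial m.1 1)

theorem map_det_monomialMatrix [CommRing R] [DecidableEq σ] {S : Type*} [CommRing S] (φ : R →+* S)
    {s : Finset (σ →₀ ℕ)} (x : s → σ → R) :
    φ (monomialMatrix x).det = (monomialMatrix fun a => φ ∘ x a).det := by
  rw [RingHom.map_det]
  congr 1
  ext a m
  rw [RingHom.mapMatrix_apply, Matrix.map_apply, monomialMatrix, monomialMatrix, Matrix.of_apply,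
    Matrix.of_apply, map_eval, map_monomial, map_one]

theorem abs_det_monomialMatrix_le [CommRing R] [LinearOrder R] [IsStrictOrderedRing R]
    [DecidableEq σ] {s : Finset (σ →₀ ℕ)} {x : s → σ → R} {B : R}
    (hx : ∀ a j, |x a j| ≤ B) :
    |(monomialMatrix x).det| ≤ s.card.factorial * B ^ (∑ m ∈ s, m.degree) := by
  have hentry (a m : s) : |monomialMatrix x a m| ≤ B ^ m.1.degree := by
    rw [monomialMatrix, Matrix.of_apply, eval_monomial, one_mul, Finsupp.prod,
      Finset.abs_prod, Finsupp.degree_apply, ← Finset.prod_pow_eq_pow_sum]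
    refine Finset.prod_le_prod (fun j _ => abs_nonneg _) fun j _ => ?_
    rw [abs_pow]
    exact pow_le_pow_left₀ (abs_nonneg _) (hx a j) _
  have hdet := map_det_le_prod (abv := AbsoluteValue.abs) (b := fun m : s => B ^ m.1.degree) hentry
  rwa [Finset.prod_pow_eq_pow_sum, Finset.sum_coe_sort s Finsupp.degree, Fintype.card_coe] at hdet

theorem exists_ne_zero_support_subset [Field R] [DecidableEq σ] {α : Type*} {s : Finset (σ →₀ ℕ)}
    {x : α → σ → R} (h : ∀ a : s → α, (monomialMatrix fun i => x (a i)).det = 0) :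
    ∃ g : MvPolynomial σ R, g ≠ 0 ∧ g.support ⊆ s ∧ ∀ a, eval (x a) g = 0 := by
  obtain ⟨c, hc, hcx⟩ := exists_ne_zero_forall_dotProduct_eq_zero
    (w := fun a (j : s) => eval (x a) (monomial j.1 (1 : R))) h
  let g : MvPolynomial σ R := ∑ j : s, monomial j.1 (c j)
  have hcoeff (m : σ →₀ ℕ) : g.coeff m = if hm : m ∈ s then c ⟨m, hm⟩ else 0 := by
    simp only [g, coeff_sum, coeff_monomial]
    split_ifs with hm
    · rw [Fintype.sum_eq_single ⟨m, hm⟩ fun j hj => if_neg (Subtype.ext_iff.not.mp hj), if_pos rfl]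
    · exact Finset.sum_eq_zero fun j _ => if_neg fun hj : j.1 = m => hm (hj ▸ j.2)
  refine ⟨g, fun hg => hc (funext fun j => ?_), fun m hm => ?_, fun a => ?_⟩
  · rw [Pi.zero_apply, ← coeff_zero j.1, ← hg, hcoeff, dif_pos j.2]
  · by_contra hms
    exact mem_support_iff.mp hm ((hcoeff m).trans (dif_neg hms))
  · rw [← hcx a]
    simp [g, dotProduct, eval_monomial]

end Interpolation

open Filter Topology

theorem tendsto_add_div_atTop (c : ℕ) :
    Tendsto (fun t : ℕ => ((t + c : ℕ) / t : ℝ)) atTop (𝓝 1) := by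
  simpa only [inv_div, Nat.cast_add, inv_one] using
    (tendsto_natCast_div_add_atTop (c : ℝ)).inv₀ one_ne_zero

theorem tendsto_choose_add_div_pow (c j : ℕ) :
    Tendsto (fun t : ℕ => ((t + c).choose j : ℝ) / (t : ℝ) ^ j) atTop (𝓝 (1 / j.factorial)) := by
  have hchoose : Tendsto (fun t : ℕ => (t.choose j : ℝ) / (t : ℝ) ^ j) atTop
      (𝓝 (1 / j.factorial)) := by
    have hequiv := (isEquivalent_choose j).div
      (Asymptotics.IsEquivalent.refl (u := fun t : ℕ => (t : ℝ) ^ j))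
    refine hequiv.symm.tendsto_nhds ((tendsto_const_nhds (x := (1 / j.factorial : ℝ))).congr' ?_)
    filter_upwards [eventually_gt_atTop 0] with t ht
    have ht' : (t : ℝ) ^ j ≠ 0 := by positivity
    rw [Pi.div_apply, div_right_comm, div_self ht']
  have h := (hchoose.comp (tendsto_add_atTop_nat c)).mul ((tendsto_add_div_atTop c).pow j)
  refine (h.congr' ?_).trans_eq (by rw [one_pow, mul_one])
  filter_upwards [eventually_gt_atTop 0] with t ht
  have ht' : ((t + c : ℕ) : ℝ) ^ j ≠ 0 := by positivity
  rw [Function.comp_apply, div_pow, div_mul_div_cancel₀ ht']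

theorem tendsto_choose_sub_choose_div_pow (d c j : ℕ) :
    Tendsto (fun t : ℕ => (((t + d + c).choose (j + 1) : ℝ) - (t + c).choose (j + 1)) / (t : ℝ) ^ j)
      atTop (𝓝 (d / j.factorial)) := by
  induction d with
  | zero => simp
  | succ d ih =>
    have h := (tendsto_choose_add_div_pow (d + c) j).add ih
    refine (h.congr fun t => ?_).trans_eq (by push_cast; ring_nf)
    have hsucc : t + (d + 1) + c = t + (d + c) + 1 := by ring
    rw [hsucc, Nat.choose_succ_succ, ← add_assoc]
    push_cast
    ring

theorem tendsto_floor_mul_choose_div_pow {ρ : ℝ} (hρ : 0 < ρ) (c j : ℕ) :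
    Tendsto (fun t : ℕ => ((⌊ρ * t⌋₊ + c).choose j : ℝ) / (t : ℝ) ^ j) atTop
      (𝓝 (ρ ^ j / j.factorial)) := by
  have hn : Tendsto (fun t : ℕ => ⌊ρ * t⌋₊) atTop atTop :=
    tendsto_nat_floor_atTop.comp (tendsto_natCast_atTop_atTop.const_mul_atTop hρ)
  have hratio : Tendsto (fun t : ℕ => (⌊ρ * t⌋₊ : ℝ) / t) atTop (𝓝 ρ) :=
    (tendsto_nat_floor_mul_div_atTop hρ.le).comp tendsto_natCast_atTop_atTop
  have h := ((tendsto_choose_add_div_pow c j).comp hn).mul (hratio.pow j)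
  refine (h.congr' ?_).trans_eq (by ring_nf)
  filter_upwards [hn.eventually_gt_atTop 0] with t ht
  have : (⌊ρ * t⌋₊ : ℝ) ≠ 0 := by exact_mod_cast ht.ne'
  rw [Function.comp_apply, div_pow, div_mul_div_cancel₀ (pow_ne_zero j this)]

theorem tendsto_log_factorial_div_pow {s : ℕ → ℕ} {r : ℕ} {c : ℝ}
    (hs : Tendsto (fun t : ℕ => (s t : ℝ) / (t : ℝ) ^ r) atTop (𝓝 c)) :
    Tendsto (fun t : ℕ => Real.log (s t).factorial / (t : ℝ) ^ (r + 1)) atTop (𝓝 0) := by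
  have hlog : Tendsto (fun t : ℕ => Real.log t / t) atTop (𝓝 0) :=
    Real.isLittleO_log_id_atTop.tendsto_div_nhds_zero.comp tendsto_natCast_atTop_atTop
  have hbound : Tendsto (fun t : ℕ => (s t : ℝ) / (t : ℝ) ^ r * ((r + 1) * (Real.log t / t)))
      atTop (𝓝 0) := by
    simpa only [mul_zero] using hs.mul (hlog.const_mul ((r : ℝ) + 1))
  refine squeeze_zero' (.of_forall fun t => by positivity) ?_ hbound
  filter_upwards [hs.eventually_lt_const (lt_add_one c), eventually_gt_atTop 0,
    tendsto_natCast_atTop_atTop.eventually_ge_atTop (c + 1)] with t hst ht htc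
  have ht' : (0 : ℝ) < t := by exact_mod_cast ht
  have hs_le : (s t : ℝ) ≤ (t : ℝ) ^ (r + 1) := by
    rw [div_lt_iff₀ (by positivity)] at hst
    rw [pow_succ']
    exact hst.le.trans (by gcongr)
  have hlog_le : Real.log (s t).factorial ≤ s t * ((r + 1) * Real.log t) := calc
    Real.log (s t).factorial ≤ Real.log ((s t : ℝ) ^ s t) :=
      Real.log_le_log (by positivity) (by exact_mod_cast Nat.factorial_le_pow _)
    _ = s t * Real.log (s t) := Real.log_pow _ _
    _ ≤ s t * ((r + 1) * Real.log t) := by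
      obtain hs0 | hs0 := (s t).eq_zero_or_pos
      · simp only [hs0, Nat.cast_zero, zero_mul, le_refl]
      · gcongr
        refine (Real.log_le_log (by positivity) hs_le).trans_eq ?_
        rw [Real.log_pow, Nat.cast_succ]
  calc Real.log (s t).factorial / (t : ℝ) ^ (r + 1)
      ≤ s t * ((r + 1) * Real.log t) / (t : ℝ) ^ (r + 1) := by gcongr
    _ = s t / (t : ℝ) ^ r * ((r + 1) * (Real.log t / t)) := by
        rw [pow_succ]; field_simp

theorem eventually_add_mul_lt_mul {α : Type*} {F : Filter α} {u l W N : α → ℝ} {L ρ ε : ℝ}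
    (hL : 0 < L) (hρ : 0 < ρ) (hε : 0 < ε) (hu : ∀ᶠ t in F, 0 < u t) (hl0 : ∀ t, 0 ≤ l t)
    (hW0 : ∀ t, 0 ≤ W t) (hl : Tendsto (fun t => l t / u t) F (𝓝 0))
    (hW : Tendsto (fun t => W t / u t) F (𝓝 L))
    (hN : Tendsto (fun t => N t / u t) F (𝓝 (ρ * L))) :
    ∀ᶠ t in F, ∀ b q : ℝ, Real.log 2 ≤ q → (ρ⁻¹ + ε) * b ≤ q → l t + W t * b < N t * q := by
  have hμ : 0 < ρ⁻¹ + ε := by positivity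
  have hlim : Tendsto (fun t => (N t - W t / (ρ⁻¹ + ε) - l t / Real.log 2) / u t) F
      (𝓝 (ρ * L - L / (ρ⁻¹ + ε) - 0 / Real.log 2)) := by
    refine ((hN.sub (hW.div_const _)).sub (hl.div_const _)).congr fun t => ?_
    ring
  have hpos : 0 < ρ * L - L / (ρ⁻¹ + ε) - 0 / Real.log 2 := by
    have : L / (ρ⁻¹ + ε) < ρ * L := by
      rw [div_lt_iff₀ hμ]
      have : ρ * L * (ρ⁻¹ + ε) = L + ρ * L * ε := by field_simp
      rw [this]
      exact lt_add_of_pos_right L (by positivity)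
    simpa using this
  filter_upwards [hu, hlim.eventually_const_lt hpos] with t hut ht b q hq hb
  have hlog2 : 0 < Real.log 2 := Real.log_pos one_lt_two
  have hq0 : 0 < q := hlog2.trans_le hq
  have hN' : l t / Real.log 2 + W t / (ρ⁻¹ + ε) < N t := by
    have := (div_pos_iff_of_pos_right hut).mp ht
    linarith
  calc l t + W t * b ≤ l t * (q / Real.log 2) + W t * (q / (ρ⁻¹ + ε)) := by
        gcongr
        · exact le_mul_of_one_le_right (hl0 t) ((one_le_div hlog2).mpr hq)
        · exact hW0 t
        · rwa [le_div_iff₀' hμ]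
    _ = (l t / Real.log 2 + W t / (ρ⁻¹ + ε)) * q := by ring
    _ < N t * q := by gcongr

section StandardExponentsAsymptotics

variable {σ : Type*} [Fintype σ] {r : ℕ}

theorem tendsto_card_standardExponents_div_pow (hσ : Fintype.card σ = r + 1) (a : σ →₀ ℕ) :
    Tendsto (fun t : ℕ => ((standardExponents a (t + a.degree)).card : ℝ) / (t : ℝ) ^ r) atTop
      (𝓝 (a.degree / r.factorial)) := by
  refine (tendsto_choose_sub_choose_div_pow a.degree (r + 1) r).congr fun t => ?_
  have h := card_standardExponents_add a t
  rw [hσ] at h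
  rw [← h, Nat.cast_add, add_sub_cancel_right]

theorem tendsto_sum_degree_standardExponents_div_pow (hσ : Fintype.card σ = r + 1) (a : σ →₀ ℕ) :
    Tendsto (fun t : ℕ => (∑ m ∈ standardExponents a (t + a.degree), m.degree : ℝ)
      / (t : ℝ) ^ (r + 1)) atTop (𝓝 (a.degree * r / (r + 1).factorial)) := by
  have h := ((tendsto_add_div_atTop a.degree).mul (tendsto_card_standardExponents_div_pow hσ a)).sub
    (tendsto_choose_sub_choose_div_pow a.degree (r + 1) (r + 1))
  have hlim : 1 * ((a.degree : ℝ) / r.factorial) - a.degree / (r + 1).factorial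
      = a.degree * r / (r + 1).factorial := by
    rw [Nat.factorial_succ]
    push_cast
    field_simp
    ring
  rw [← hlim]
  refine h.congr fun t => ?_
  have hsum := sum_standardExponents_tsub_degree_add a t
  have hdeg : ∑ m ∈ standardExponents a (t + a.degree), m.degree
      + ∑ m ∈ standardExponents a (t + a.degree), (t + a.degree - m.degree)
      = (t + a.degree) * (standardExponents a (t + a.degree)).card := by
    rw [← Finset.sum_add_distrib, mul_comm, ← smul_eq_mul, ← Finset.sum_const]
    exact Finset.sum_congr rfl fun m hm => add_tsub_cancel_of_le (mem_standardExponents.mp hm).1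
  rw [hσ] at hsum
  rw [← hsum, div_mul_div_comm, ← pow_succ', ← sub_div]
  congr 1
  have hdeg' := congrArg (Nat.cast (R := ℝ)) hdeg
  push_cast at hdeg' ⊢
  linear_combination -hdeg'

theorem tendsto_mul_card_sub_choose_div_pow {ρ : ℝ} (hσ : Fintype.card σ = r + 1) (a : σ →₀ ℕ)
    (hρ0 : 0 < ρ) (hρ : ρ ^ r = a.degree) :
    Tendsto (fun t : ℕ => ((⌊ρ * t⌋₊ * (standardExponents a (t + a.degree)).card : ℝ)
      - (⌊ρ * t⌋₊ + r).choose (r + 1)) / (t : ℝ) ^ (r + 1)) atTop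
      (𝓝 (ρ * (a.degree * r / (r + 1).factorial))) := by
  have hratio : Tendsto (fun t : ℕ => (⌊ρ * t⌋₊ : ℝ) / t) atTop (𝓝 ρ) :=
    (tendsto_nat_floor_mul_div_atTop hρ0.le).comp tendsto_natCast_atTop_atTop
  have h := (hratio.mul (tendsto_card_standardExponents_div_pow hσ a)).sub
    (tendsto_floor_mul_choose_div_pow hρ0 r (r + 1))
  refine (h.congr fun t => ?_).trans_eq ?_
  · rw [div_mul_div_comm, ← pow_succ', ← sub_div]
  · rw [pow_succ, hρ, Nat.factorial_succ]
    congr 1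
    push_cast
    field_simp
    ring

/-- Taking `n = ⌊ρ t⌋` with `ρ ^ r` the degree `d` of `a` is optimal: this `ρ` maximizes
`ρ * d / r! - ρ ^ (r + 1) / (r + 1)!`, the coefficient of `t ^ (r + 1)` in the power of `p`
dividing the determinant. -/
theorem eventually_factorial_mul_pow_lt {ρ ε : ℝ} (hσ : Fintype.card σ = r + 1) (hr : 1 ≤ r)
    {a : σ →₀ ℕ} (ha : 1 ≤ a.degree) (hρ0 : 0 < ρ) (hρ : ρ ^ r = a.degree) (hε : 0 < ε) :
    ∀ᶠ t : ℕ in atTop, ∀ B : ℝ, 1 ≤ B → ∀ p : ℕ, 2 ≤ p → B ^ (ρ⁻¹ + ε) ≤ p →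
      (standardExponents a (t + a.degree)).card.factorial
          * B ^ (∑ m ∈ standardExponents a (t + a.degree), m.degree)
          * p ^ (⌊ρ * t⌋₊ + r).choose (r + 1)
        < (p : ℝ) ^ (⌊ρ * t⌋₊ * (standardExponents a (t + a.degree)).card) := by
  have hL : 0 < (a.degree * r / (r + 1).factorial : ℝ) := by positivity
  have hpow : ∀ᶠ t : ℕ in atTop, 0 < (t : ℝ) ^ (r + 1) := by
    filter_upwards [eventually_gt_atTop 0] with t ht using by positivity
  filter_upwards [eventually_add_mul_lt_mul hL hρ0 hε hpow (fun t => by positivity)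
    (fun t => by positivity)
    (tendsto_log_factorial_div_pow (tendsto_card_standardExponents_div_pow hσ a))
    (tendsto_sum_degree_standardExponents_div_pow hσ a)
    (tendsto_mul_card_sub_choose_div_pow hσ a hρ0 hρ)] with t ht B hB p hp hBp
  have hB0 : 0 < B := one_pos.trans_le hB
  have hlog := ht (Real.log B) (Real.log p) (Real.log_le_log two_pos (by exact_mod_cast hp)) (by
    rw [← Real.log_rpow hB0]
    exact Real.log_le_log (by positivity) hBp)
  rw [← Real.log_lt_log_iff (by positivity) (by positivity), Real.log_mul (by positivity)
    (by positivity), Real.log_mul (by positivity) (by positivity)]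
  simp only [Real.log_pow]
  push_cast
  linarith

theorem exists_factorial_mul_pow_lt (hσ : Fintype.card σ = r + 1) (hr : 1 ≤ r) {d : ℕ}
    (hd : 1 ≤ d) {ε : ℝ} (hε : 0 < ε) :
    ∃ t n : ℕ, ∀ a : σ →₀ ℕ, a.degree = d → ∀ B : ℝ, 1 ≤ B → ∀ p : ℕ, 2 ≤ p →
      B ^ ((d : ℝ) ^ (-(r : ℝ)⁻¹) + ε) ≤ p →
      (standardExponents a (t + d)).card.factorial
          * B ^ (∑ m ∈ standardExponents a (t + d), m.degree) * p ^ (n + r).choose (r + 1)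
        < (p : ℝ) ^ (n * (standardExponents a (t + d)).card) := by
  obtain ⟨i⟩ : Nonempty σ := Fintype.card_pos_iff.mp (hσ ▸ r.succ_pos)
  have hdeg : (Finsupp.single i d).degree = d := Finsupp.degree_single i d
  have hρ0 : 0 < (d : ℝ) ^ (r : ℝ)⁻¹ := Real.rpow_pos_of_pos (by positivity) _
  have hρ : ((d : ℝ) ^ (r : ℝ)⁻¹) ^ r = (Finsupp.single i d).degree := by
    rw [Real.rpow_inv_natCast_pow d.cast_nonneg (Nat.one_le_iff_ne_zero.mp hr), hdeg]
  obtain ⟨t, ht⟩ := (eventually_factorial_mul_pow_lt hσ hr (hd.trans_eq hdeg.symm) hρ0 hρ hε).exists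
  refine ⟨t, ⌊(d : ℝ) ^ (r : ℝ)⁻¹ * t⌋₊, fun a ha B hB p hp hBp => ?_⟩
  have hcard := sum_standardExponents_congr (ha.trans hdeg.symm) t fun _ => 1
  have hsum := sum_standardExponents_congr (ha.trans hdeg.symm) t id
  simp only [Finset.sum_const, smul_eq_mul, mul_one, id, ha] at hcard hsum
  rw [Real.rpow_neg d.cast_nonneg] at hBp
  rw [hcard, hsum]
  simpa only [hdeg] using ht B hB p hp hBp

end StandardExponentsAsymptotics

section AffineHypersurface

theorem pow_dvd_pow_mul_det_eval {R σ ι : Type*} [CommRing R] [Fintype σ] [Fintype ι]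
    [DecidableEq ι] {r : ℕ} (hσ : Fintype.card σ = r + 1) {p : R}
    {f : MvPolynomial σ R} {x₀ : σ → R} {i : σ} (hf : IsCoprime (eval x₀ (pderiv i f)) p) (n : ℕ)
    (g : ι → MvPolynomial σ R) {x : ι → σ → R} (hx : ∀ a j, p ∣ x a j - x₀ j)
    (hfx : ∀ a, eval (x a) f = 0) :
    p ^ (n * Fintype.card ι)
      ∣ p ^ (n + r).choose (r + 1) * (Matrix.of fun a b => eval (x a) (g b)).det := by
  classical
  choose y hy using hx
  have hxy (a) : x a = fun j => x₀ j + p * y a j := funext fun j => eq_add_of_sub_eq' (hy a j)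
  choose c hc using fun b => exists_pow_dvd_eval_sub_sum hf n (g b)
  have hcard : Fintype.card {j // j ≠ i} = r := by
    rw [Fintype.card_subtype_compl, Fintype.card_subtype_eq, hσ, Nat.add_sub_cancel]
  have hsum : ∑ α : exponentsLE {j // j ≠ i} n, (n - α.1.degree) = (n + r).choose (r + 1) := by
    rw [Finset.sum_coe_sort _ fun α : {j // j ≠ i} →₀ ℕ => n - α.degree,
      sum_exponentsLE_tsub_degree, hcard]
  rw [← hsum]
  refine pow_dvd_pow_mul_det_of_dvd_sub_mul
    (A := Matrix.of fun a (α : exponentsLE {j // j ≠ i} n) =>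
      p ^ α.1.degree * ∏ j : {j // j ≠ i}, y a j ^ α.1 j)
    (M := Matrix.of fun α b => c b α.1) (fun a α => dvd_mul_right _ _) fun a b => ?_
  have hab := hc b (y a) (hxy a ▸ hfx a)
  rw [← hxy, ← Finset.sum_coe_sort] at hab
  exact hab

theorem det_monomialMatrix_eq_zero {σ : Type*} [Fintype σ] [DecidableEq σ] {r n p : ℕ} {B : ℝ}
    (hσ : Fintype.card σ = r + 1) (hp : 0 < p) {f : MvPolynomial σ ℤ} {x₀ : σ → ℤ} {i : σ}
    (hf : IsCoprime (eval x₀ (pderiv i f)) p) {s : Finset (σ →₀ ℕ)}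
    (hBp : s.card.factorial * B ^ (∑ m ∈ s, m.degree) * p ^ (n + r).choose (r + 1)
      < (p : ℝ) ^ (n * s.card)) {x : s → σ → ℤ} (hxB : ∀ a j, (|x a j| : ℝ) ≤ B)
    (hx : ∀ a j, (p : ℤ) ∣ x a j - x₀ j) (hfx : ∀ a, eval (x a) f = 0) :
    (monomialMatrix x).det = 0 := by
  have hdvd : (p : ℤ) ^ (n * s.card) ∣ p ^ (n + r).choose (r + 1) * (monomialMatrix x).det := by
    rw [← Fintype.card_coe]
    exact pow_dvd_pow_mul_det_eval hσ hf n (fun m : s => monomial m.1 1) hx hfx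
  have hdet : |((monomialMatrix x).det : ℝ)| ≤ s.card.factorial * B ^ (∑ m ∈ s, m.degree) := by
    rw [← eq_intCast (Int.castRingHom ℝ), map_det_monomialMatrix]
    exact abs_det_monomialMatrix_le hxB
  have hlt : |(p : ℤ) ^ (n + r).choose (r + 1) * (monomialMatrix x).det| < p ^ (n * s.card) := by
    rw [abs_mul, abs_of_pos (by positivity), mul_comm]
    exact_mod_cast (mul_le_mul_of_nonneg_right hdet (by positivity)).trans_lt hBp
  exact (mul_eq_zero.mp (Int.eq_zero_of_abs_lt_dvd hdvd hlt)).resolve_left (by positivity)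

theorem exists_support_subset_eval_eq_zero {σ : Type*} [Fintype σ] {r n p : ℕ}
    (hσ : Fintype.card σ = r + 1) (hp : p.Prime) {B : ℝ} {s : Finset (σ →₀ ℕ)} (hs : s.Nonempty)
    (hBp : s.card.factorial * B ^ (∑ m ∈ s, m.degree) * p ^ (n + r).choose (r + 1)
      < (p : ℝ) ^ (n * s.card)) {f : MvPolynomial σ ℤ} {S : Set (σ → ℤ)}
    (hSB : ∀ x ∈ S, ∀ j, (|x j| : ℝ) ≤ B) (hSf : ∀ x ∈ S, eval x f = 0)
    (hSp : ∀ x ∈ S, ∀ y ∈ S, ∀ j, (p : ℤ) ∣ x j - y j)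
    (hSd : ∀ x ∈ S, ∃ i, ¬ (p : ℤ) ∣ eval x (pderiv i f)) :
    ∃ g : MvPolynomial σ ℚ, g ≠ 0 ∧ g.support ⊆ s ∧ ∀ x ∈ S, eval (fun j => (x j : ℚ)) g = 0 := by
  classical
  obtain ⟨m, hm⟩ := hs
  have hdet (a : s → S) : (monomialMatrix fun i j => ((a i).1 j : ℚ)).det = 0 := by
    obtain ⟨i, hi⟩ := hSd _ (a ⟨m, hm⟩).2
    have hcop := ((Nat.prime_iff_prime_int.mp hp).coprime_iff_not_dvd.mpr hi).symm
    have hdet := det_monomialMatrix_eq_zero (x := fun i => (a i).1) hσ hp.pos hcop hBp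
      (fun b => hSB _ (a b).2) (fun b => hSp _ (a b).2 _ (a ⟨m, hm⟩).2) fun b => hSf _ (a b).2
    have hcast := map_det_monomialMatrix (Int.castRingHom ℚ) fun i => (a i).1
    rw [hdet, map_zero] at hcast
    exact hcast.symm
  obtain ⟨g, hg, hgs, hgS⟩ :=
    exists_ne_zero_support_subset (x := fun (x : S) j => (x.1 j : ℚ)) hdet
  exact ⟨g, hg, hgs, fun x hx => hgS ⟨x, hx⟩⟩

open MonomialOrder in
theorem exists_not_dvd_eval_eq_zero {σ : Type*} [Fintype σ] [LinearOrder σ] {r d : ℕ}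
    (hσ : Fintype.card σ = r + 1) (hr : 1 ≤ r) (hd : 1 ≤ d) {ε : ℝ} (hε : 0 < ε) :
    ∃ D : ℕ, ∀ f : MvPolynomial σ ℤ, f.totalDegree = d → ∀ B : ℝ, 1 ≤ B → ∀ p : ℕ, p.Prime →
      B ^ ((d : ℝ) ^ (-(r : ℝ)⁻¹) + ε) ≤ p → ∀ S : Set (σ → ℤ),
      (∀ x ∈ S, ∀ j, (|x j| : ℝ) ≤ B) → (∀ x ∈ S, eval x f = 0) →
      (∀ x ∈ S, ∀ y ∈ S, ∀ j, (p : ℤ) ∣ x j - y j) →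
      (∀ x ∈ S, ∃ i, ¬ (p : ℤ) ∣ eval x (pderiv i f)) →
      ∃ g : MvPolynomial σ ℚ, g.totalDegree ≤ D ∧ ¬ map (Int.castRingHom ℚ) f ∣ g ∧
        ∀ x ∈ S, eval (fun j => (x j : ℚ)) g = 0 := by
  obtain ⟨t, n, htn⟩ := exists_factorial_mul_pow_lt hσ hr hd hε
  refine ⟨t + d, fun f hf B hB p hp hBp S hSB hSf hSp hSd => ?_⟩
  let a := degLex.degree (map (Int.castRingHom ℚ) f)
  have ha : a.degree = d := by
    rw [degree_degLexDegree, totalDegree,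
      support_map_of_injective _ (RingHom.injective_int _), ← totalDegree, hf]
  have hs : (standardExponents a (t + d)).Nonempty := by
    refine ⟨0, mem_standardExponents.mpr ⟨by simp, fun ha0 => ?_⟩⟩
    rw [nonpos_iff_eq_zero.mp ha0, map_zero] at ha
    omega
  obtain ⟨g, hg, hgs, hgS⟩ := exists_support_subset_eval_eq_zero hσ hp hs
    (htn a ha B hB p hp.two_le hBp) hSB hSf hSp hSd
  have hsupp (m) (hm : m ∈ g.support) := mem_standardExponents.mp (hgs hm)
  refine ⟨g, Finset.sup_le fun m hm => ?_, ?_, hgS⟩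
  · exact (hsupp m hm).1
  · exact not_dvd_of_forall_not_le degLex hg fun m hm => (hsupp m hm).2

end AffineHypersurface

section Dehomogenization

variable {R : Type*} {n d : ℕ}

/-- Dehomogenization with respect to the variable `X 0`: substitution of `1` for `X 0` and of
`X i` for `X i.succ`. -/
noncomputable def dehomogenize [CommSemiring R] :
    MvPolynomial (Fin (n + 1)) R →ₐ[R] MvPolynomial (Fin n) R :=
  aeval (Fin.cons 1 X)

section CommSemiring

variable [CommSemiring R]

theorem eval_dehomogenize (x : Fin n → R) (F : MvPolynomial (Fin (n + 1)) R) :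
    eval x (dehomogenize F) = eval (Fin.cons 1 x) F := by
  rw [dehomogenize, eval_aeval]
  congr 2
  ext i
  cases i using Fin.cases with
  | zero => exact map_one _
  | succ i => exact eval_X i

theorem eval_comp_cons_one {S : Type*} [CommSemiring S] (φ : S →+* R) (x : Fin n → S)
    (F : MvPolynomial (Fin (n + 1)) R) :
    eval (φ ∘ Fin.cons 1 x) F = eval (φ ∘ x) (dehomogenize F) := by
  rw [eval_dehomogenize, Fin.comp_cons φ, map_one]

theorem dehomogenize_monomial (m : Fin (n + 1) →₀ ℕ) (c : R) :
    dehomogenize (monomial m c) = monomial m.tail c := by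
  rw [dehomogenize, aeval_monomial, Finsupp.prod_fintype _ _ fun _ => pow_zero _,
    Fin.prod_univ_succ, Fin.cons_zero, one_pow, one_mul, monomial_eq,
    Finsupp.prod_fintype _ _ fun _ => pow_zero _]
  rfl

theorem dehomogenize_map {S : Type*} [CommSemiring S] (φ : R →+* S)
    (F : MvPolynomial (Fin (n + 1)) R) : dehomogenize (map φ F) = map φ (dehomogenize F) := by
  induction F using MvPolynomial.induction_on' with
  | add F G hF hG => simp only [map_add, hF, hG]
  | monomial m c => simp only [map_monomial, dehomogenize_monomial]

theorem pderiv_dehomogenize (i : Fin n) (F : MvPolynomial (Fin (n + 1)) R) :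
    pderiv i (dehomogenize F) = dehomogenize (pderiv i.succ F) := by
  induction F using MvPolynomial.induction_on' with
  | add F G hF hG => simp only [map_add, hF, hG]
  | monomial m c =>
    rw [dehomogenize_monomial, pderiv_monomial, pderiv_monomial, dehomogenize_monomial]
    congr
    ext j
    simp [Finsupp.tail_apply, Finsupp.single_apply]

theorem degree_eq_add_degree_tail (m : Fin (n + 1) →₀ ℕ) : m.degree = m 0 + m.tail.degree := by
  rw [Finsupp.degree_eq_sum, Finsupp.degree_eq_sum, Fin.sum_univ_succ]
  rfl

theorem injOn_tail_setOf_degree_eq (d : ℕ) :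
    Set.InjOn (Finsupp.tail : (Fin (n + 1) →₀ ℕ) → Fin n →₀ ℕ) {m | m.degree = d} := by
  intro l (hl : l.degree = d) m (hm : m.degree = d) hlm
  rw [degree_eq_add_degree_tail, hlm] at hl
  rw [degree_eq_add_degree_tail] at hm
  rw [← Finsupp.cons_tail l, ← Finsupp.cons_tail m, hlm,
    Nat.add_right_cancel (hl.trans hm.symm)]

theorem dehomogenize_eq_sum (F : MvPolynomial (Fin (n + 1)) R) :
    dehomogenize F = ∑ m ∈ F.support, monomial m.tail (F.coeff m) := by
  conv_lhs => rw [F.as_sum, map_sum]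
  simp only [dehomogenize_monomial]

theorem coeff_tail_dehomogenize {F : MvPolynomial (Fin (n + 1)) R} (hF : F.IsHomogeneous d)
    {m : Fin (n + 1) →₀ ℕ} (hm : m.degree = d) : (dehomogenize F).coeff m.tail = F.coeff m := by
  simp only [dehomogenize_eq_sum, coeff_sum, coeff_monomial]
  rw [Finset.sum_eq_single m, if_pos rfl]
  · intro l hl hlm
    have hld : l.degree = d := (hF.degree_eq_sum_deg_support hl).symm
    exact if_neg fun h => hlm (injOn_tail_setOf_degree_eq d hld hm h)
  · intro hms
    rw [if_pos rfl, notMem_support_iff.mp hms]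

theorem totalDegree_dehomogenize {F : MvPolynomial (Fin (n + 1)) R} (hF : F.IsHomogeneous d)
    (hX : ¬ X 0 ∣ F) : (dehomogenize F).totalDegree = d := by
  refine le_antisymm ?_ ?_
  · rw [dehomogenize_eq_sum]
    refine totalDegree_finsetSum_le fun m hm => (totalDegree_monomial_le _ _).trans ?_
    rw [hF.degree_eq_sum_deg_support hm, ← Finsupp.degree_apply, degree_eq_add_degree_tail]
    exact Nat.le_add_left _ _
  · obtain ⟨m, hm, hm0⟩ : ∃ m ∈ F.support, m 0 = 0 := by
      contrapose! hX
      rw [F.as_sum]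
      exact Finset.dvd_sum fun m hm => X_dvd_monomial.mpr (Or.inr (hX m hm))
    have hmd : m.degree = d := (hF.degree_eq_sum_deg_support hm).symm
    have htail : m.tail ∈ (dehomogenize F).support := by
      rwa [mem_support_iff, coeff_tail_dehomogenize hF hmd, ← mem_support_iff]
    calc
      d = m.tail.degree := by rw [← hmd, degree_eq_add_degree_tail, hm0, zero_add]
      _ ≤ (dehomogenize F).totalDegree := le_totalDegree htail

theorem exists_isHomogeneous_dehomogenize_eq {g : MvPolynomial (Fin n) R}
    (hg : g.totalDegree ≤ d) :
    ∃ G : MvPolynomial (Fin (n + 1)) R, G.IsHomogeneous d ∧ dehomogenize G = g := by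
  refine ⟨∑ m ∈ g.support, monomial (m.cons (d - m.degree)) (g.coeff m), ?_, ?_⟩
  · refine IsHomogeneous.sum _ _ _ fun m hm => isHomogeneous_monomial _ ?_
    have hmd : m.degree ≤ d := (le_totalDegree hm).trans hg
    rw [degree_eq_add_degree_tail, Finsupp.cons_zero, Finsupp.tail_cons, Nat.sub_add_cancel hmd]
  · simp only [map_sum, dehomogenize_monomial, Finsupp.tail_cons, support_sum_monomial_coeff]

end CommSemiring

theorem exists_not_dvd_eval_pderiv_dehomogenize [CommRing R] {F : MvPolynomial (Fin (n + 1)) R}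
    (hF : F.IsHomogeneous d) {x : Fin n → R} (hx : eval (Fin.cons 1 x) F = 0) {p : R}
    {i : Fin (n + 1)} (hi : ¬ p ∣ eval (Fin.cons 1 x) (pderiv i F)) :
    ∃ j, ¬ p ∣ eval x (pderiv j (dehomogenize F)) := by
  contrapose! hi with hdvd
  simp only [pderiv_dehomogenize, eval_dehomogenize] at hdvd
  cases i using Fin.cases with
  | succ j => exact hdvd j
  | zero =>
    -- Where `F` vanishes, Euler's identity expresses `∂F/∂x_0` through the other partials.
    have heuler := congrArg (eval (Fin.cons 1 x)) hF.sum_X_mul_pderiv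
    rw [map_sum, map_nsmul, hx, smul_zero, Fin.sum_univ_succ] at heuler
    simp only [map_mul, eval_X, Fin.cons_zero, one_mul, Fin.cons_succ] at heuler
    rw [eq_neg_of_add_eq_zero_left heuler, dvd_neg]
    exact Finset.dvd_sum fun j _ => (hdvd j).mul_left _

end Dehomogenization

theorem eval_smul_of_isHomogeneous {R σ : Type*} [CommSemiring R] {F : MvPolynomial σ R} {d : ℕ}
    (hF : F.IsHomogeneous d) (c : R) (v : σ → R) : eval (c • v) F = c ^ d * eval v F := by
  rw [eval_eq, eval_eq, Finset.mul_sum]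
  refine Finset.sum_congr rfl fun m hm => ?_
  simp only [Pi.smul_apply, smul_eq_mul, mul_pow]
  rw [Finset.prod_mul_distrib, Finset.prod_pow_eq_pow_sum,
    ← hF.degree_eq_sum_deg_support hm, mul_left_comm]

theorem intCast_eval {R σ : Type*} [CommRing R] (x : σ → ℤ) (f : MvPolynomial σ ℤ) :
    ((eval x f : ℤ) : R) = eval (fun j => (x j : R)) (map (Int.castRingHom R) f) :=
  map_eval (Int.castRingHom R) x f

theorem rpow_neg_inv_two {x : ℝ} (hx : 0 ≤ x) : x ^ (-((2 : ℕ) : ℝ)⁻¹) = 1 / Real.sqrt x := by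
  rw [Real.rpow_neg hx, Nat.cast_ofNat, ← one_div (2 : ℝ), ← Real.sqrt_eq_rpow, one_div]

end DeterminantMethod

open DeterminantMethod

namespace ReducesTo

variable {n p : ℕ} [Fact p.Prime] {ξ : Fin n → ℤ} {v : Fin n → ZMod p}

theorem not_dvd_eval (h : ReducesTo p ξ v) {F : MvPolynomial (Fin n) ℤ} {d : ℕ}
    (hF : F.IsHomogeneous d) (hv : eval v (map (Int.castRingHom (ZMod p)) F) ≠ 0) :
    ¬ (p : ℤ) ∣ eval ξ F := by
  obtain ⟨c, hc, hcv⟩ := h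
  rw [← ZMod.intCast_zmod_eq_zero_iff_dvd, intCast_eval, hcv,
    eval_smul_of_isHomogeneous (hF.map _)]
  exact mul_ne_zero (pow_ne_zero _ hc) hv

theorem dvd_sub (hξ : ReducesTo p ξ v) {η : Fin n → ℤ} (hη : ReducesTo p η v) {i : Fin n}
    (hi : ξ i = 1) (hi' : η i = 1) (j : Fin n) : (p : ℤ) ∣ ξ j - η j := by
  obtain ⟨c, -, hc⟩ := hξ
  obtain ⟨b, -, hb⟩ := hη
  have hξj (j) : (ξ j : ZMod p) = c * v j := congrFun hc j
  have hηj (j) : (η j : ZMod p) = b * v j := congrFun hb j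
  have hci : c * v i = 1 := by rw [← hξj, hi, Int.cast_one]
  have hbi : b * v i = 1 := by rw [← hηj, hi', Int.cast_one]
  have hcb : c = b := mul_right_cancel₀ (right_ne_zero_of_mul_eq_one hci) (hci.trans hbi.symm)
  rw [← ZMod.intCast_zmod_eq_zero_iff_dvd, Int.cast_sub, hξj, hηj, hcb, sub_self]

end ReducesTo

theorem stmt_11_general (r d : ℕ) (hr : 1 ≤ r) (hd : 1 ≤ d) (ε : ℝ) (hε : 0 < ε) :
    ∃ C : ℕ, ∀ F : MvPolynomial (Fin (r + 2)) ℤ, F.IsHomogeneous d → ¬ X 0 ∣ F →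
      ∀ B : ℝ, 1 ≤ B → ∀ p : ℕ, p.Prime → B ^ ((d : ℝ) ^ (-(r : ℝ)⁻¹) + ε) ≤ p →
      ∀ v : Fin (r + 2) → ZMod p,
        (∃ i, eval v (pderiv i (map (Int.castRingHom (ZMod p)) F)) ≠ 0) →
      ∃ G : MvPolynomial (Fin (r + 2)) ℚ, G.IsHomogeneous C ∧
        ¬ map (Int.castRingHom ℚ) F ∣ G ∧
        ∀ ξ : Fin (r + 2) → ℤ, ξ 0 = 1 → (∀ m, m ≠ 0 → (|ξ m| : ℝ) ≤ B) → eval ξ F = 0 →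
          ReducesTo p ξ v → eval (fun m => (ξ m : ℚ)) G = 0 := by
  obtain ⟨D, hD⟩ := exists_not_dvd_eval_eq_zero (Fintype.card_fin (r + 1)) hr hd hε
  refine ⟨D, fun F hF hX B hB p hp hBp v ⟨i, hi⟩ => ?_⟩
  have : Fact p.Prime := ⟨hp⟩
  rw [pderiv_map] at hi
  let S : Set (Fin (r + 1) → ℤ) := {x | (∀ j, (|x j| : ℝ) ≤ B) ∧
    eval (Fin.cons 1 x) F = 0 ∧ ReducesTo p (Fin.cons 1 x) v}
  obtain ⟨g, hgD, hg, hgS⟩ := hD (dehomogenize F) (totalDegree_dehomogenize hF hX) B hB p hp hBp S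
    (fun x hx => hx.1) (fun x hx => (eval_dehomogenize x F).trans hx.2.1)
    (fun x hx y hy j => hx.2.2.dvd_sub hy.2.2 (i := 0) rfl rfl j.succ)
    fun x hx => exists_not_dvd_eval_pderiv_dehomogenize hF hx.2.1 (hx.2.2.not_dvd_eval hF.pderiv hi)
  obtain ⟨G, hG, rfl⟩ := exists_isHomogeneous_dehomogenize_eq hgD
  refine ⟨G, hG, fun hFG => hg ?_, fun ξ hξ0 hξB hξF hξv => ?_⟩
  · rw [← dehomogenize_map]
    exact map_dvd _ hFG
  · cases ξ using Fin.consCases with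
    | cons k x =>
      obtain rfl : k = 1 := hξ0
      exact (eval_comp_cons_one (Int.castRingHom ℚ) x G).trans
        (hgS x ⟨fun j => hξB _ j.succ_ne_zero, hξF, hξv⟩)

/-- Lemma 6.2 of Salberger (Heath-Brown): let `X = {F = 0} ⊂ P^3` be an integral
surface of degree `d` met properly by the hyperplane `x_0 = 0`, let `p ≥ B^{1/√d + ε}`
be a prime and `P` a non-singular `𝔽_p`-point on `X_p`.  Then there is a form `G` of
degree bounded in terms of `d` and `ε`, not divisible by `F`, which vanishes at every
point of `S_1(X;B;P)`. -/
theorem stmt_11 (d : ℕ) (hd : 1 ≤ d) (ε : ℝ) (hε : 0 < ε) :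
    ∃ C : ℕ, ∀ F : MvPolynomial (Fin 4) ℤ,
      (∀ c : ℤ, (∀ m, c ∣ F.coeff m) → IsUnit c) →
      F.IsHomogeneous d →
      Irreducible (MvPolynomial.map (Int.castRingHom ℚ) F) →
      ¬ (X 0 ∣ F) →
      ∀ B : ℝ, 1 ≤ B →
      ∀ p : ℕ, p.Prime → ((p : ℝ) ≥ B ^ ((1 : ℝ) / Real.sqrt d + ε)) →
      ∀ v : Fin 4 → ZMod p, v ≠ 0 →
        eval v (MvPolynomial.map (Int.castRingHom (ZMod p)) F) = 0 →
        (∃ i, eval v (pderiv i (MvPolynomial.map (Int.castRingHom (ZMod p)) F)) ≠ 0) →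
      ∃ G : MvPolynomial (Fin 4) ℚ, ∃ e ≤ C, G.IsHomogeneous e ∧
        ¬ (MvPolynomial.map (Int.castRingHom ℚ) F ∣ G) ∧
        ∀ ξ : Fin 4 → ℤ, ξ 0 = 1 →
          (∀ m, m ≠ 0 → (|ξ m| : ℝ) ≤ B) → eval ξ F = 0 →
          ReducesTo p ξ v →
          eval (fun m => (ξ m : ℚ)) G = 0 := by
  obtain ⟨C, hC⟩ := stmt_11_general 2 d one_le_two hd ε hε
  refine ⟨C, fun F _ hF _ hX B hB p hp hBp v _ _ hv => ?_⟩
  rw [← rpow_neg_inv_two d.cast_nonneg] at hBp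
  obtain ⟨G, hG⟩ := hC F hF hX B hB p hp hBp v hv
  exact ⟨G, C, le_rfl, hG⟩
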